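/- Assume the standing Lyapunov-pair setup for f: Y -> Y with nonempty compact isolated invariant set K and resulting positively f-invariant, f-admissible isolating neighborhood B, let f_n -> f be continuous maps such that N' is {f_{n_m}}-admissible for every subsequence of (f_n), and let K_n denote the maximal f_n-invariant set in B. Then there are delta > 0 and n_0 such that for all n >= n_0 there exist closed, positively f_n-invariant sets N_n and N_n' with N_n contained in U_delta(K), U_delta(K) contained in N_n', and N_n' contained in B; moreover K is contained in int(N_n), and there is eps > 0 with U_eps(K_n) contained in N_n'. -/

import Mathlib

open MeasureTheory Topology Filter Metric Set
open scoped ENNReal NNReal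

noncomputable section

variable {Y : Type*}

/-- A set `N` is positively invariant under `g`. -/
def PosInvariant (g : Y → Y) (N : Set Y) : Prop :=
  ∀ x ∈ N, g x ∈ N

/-- There is a full left solution of `g` in `N` through `x` (indexed so that `u n = x_{-n}`). -/
def FullLeftSolution (g : Y → Y) (N : Set Y) (x : Y) : Prop :=
  ∃ u : ℕ → Y, u 0 = x ∧ (∀ k, g (u (k + 1)) = u k) ∧ ∀ k, u k ∈ N

/-- The maximal positively invariant subset `A⁺(N)` of `N`. -/
def aPlus (g : Y → Y) (N : Set Y) : Set Y :=
  {x | x ∈ N ∧ ∀ k : ℕ, g^[k] x ∈ N}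

/-- The maximal negatively invariant subset `A⁻(N)` of `N`. -/
def aMinus (g : Y → Y) (N : Set Y) : Set Y :=
  {x | x ∈ N ∧ FullLeftSolution g N x}

/-- The maximal invariant subset `A(N) = A⁺(N) ∩ A⁻(N)` of `N`. -/
def maxInv (g : Y → Y) (N : Set Y) : Set Y :=
  aPlus g N ∩ aMinus g N

/-- `N` is an isolating neighborhood of the isolated invariant set `K` for `g`. -/
def IsIsolatingNbhd [TopologicalSpace Y] (g : Y → Y) (K N : Set Y) : Prop :=
  IsClosed N ∧ K ⊆ interior N ∧ maxInv g N = K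

/-- `N` is `{gₙ}`-admissible: endpoints of longer and longer orbit segments staying in `N`
have a convergent subsequence. -/
def SeqAdmissible [TopologicalSpace Y] (g : ℕ → Y → Y) (N : Set Y) : Prop :=
  ∀ (x : ℕ → Y) (m : ℕ → ℕ), Tendsto m atTop atTop →
    (∀ n, ∀ k ≤ m n, (g n)^[k] (x n) ∈ N) →
    ∃ (y : Y) (φ : ℕ → ℕ), StrictMono φ ∧
      Tendsto (fun j => (g (φ j))^[m (φ j)] (x (φ j))) atTop (𝓝 y)

/-- `N` is `g`-admissible. -/
def Admissible [TopologicalSpace Y] (g : Y → Y) (N : Set Y) : Prop :=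
  SeqAdmissible (fun _ => g) N

/-- `gₙ → g` in the sense that `gₙ(xₙ) → g(x)` whenever `xₙ → x`. -/
def MapSeqConv [TopologicalSpace Y] (g : ℕ → Y → Y) (f : Y → Y) : Prop :=
  ∀ (x : ℕ → Y) (x₀ : Y), Tendsto x atTop (𝓝 x₀) →
    Tendsto (fun n => g n (x n)) atTop (𝓝 (f x₀))

/-- The set `P₁^ε = N ∩ cl {x ∈ int N' : φ(x) < ε}` from the Lyapunov-pair construction. -/
def P1set [TopologicalSpace Y] (N N' : Set Y) (φ : Y → ℝ) (ε : ℝ) : Set Y :=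
  N ∩ closure {x | x ∈ interior N' ∧ φ x < ε}

/-- The set `V(a) = {x ∈ int B : φ(x) < a}`. -/
def Vset [TopologicalSpace Y] (B : Set Y) (φ : Y → ℝ) (a : ℝ) : Set Y :=
  {x | x ∈ interior B ∧ φ x < a}

/-- The standing Lyapunov-pair setup: a continuous map `f` with a nonempty compact isolated
invariant set `K`, `f`-admissible isolating neighborhoods `N ⊆ int N' ∩ f⁻¹(int N')` with
`A⁻(N) = A(N) = K`, and a Lyapunov pair `(φ, γ)` on a neighborhood `W` of `K`. -/
structure LyapunovSetup (Y : Type*) [MetricSpace Y] where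
  f : Y → Y
  hf : Continuous f
  K : Set Y
  N : Set Y
  N' : Set Y
  W : Set Y
  phi : Y → ℝ
  gam : Y → ℝ
  hK_ne : K.Nonempty
  hK_cpt : IsCompact K
  hN_bdd : Bornology.IsBounded N
  hN'_bdd : Bornology.IsBounded N'
  hN_iso : IsIsolatingNbhd f K N
  hN'_iso : IsIsolatingNbhd f K N'
  hN_adm : Admissible f N
  hN'_adm : Admissible f N'
  hN_sub : N ⊆ interior N' ∩ f ⁻¹' (interior N')
  hAminus : aMinus f N = K
  hW_nbhd : K ⊆ interior W
  hW_sub : W ⊆ N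
  hW_dist : ∃ δ : ℝ, 0 < δ ∧ ∀ x ∈ W, ∀ y ∈ frontier N', δ ≤ dist x y
  hphi_cont : ContinuousOn phi W
  hgam_cont : ContinuousOn gam W
  hphi_nonneg : ∀ x ∈ W, 0 ≤ phi x
  hgam_nonneg : ∀ x ∈ W, 0 ≤ gam x
  hK_zero : ∀ x ∈ K, phi x = 0 ∧ gam x = 0
  hmono : ∀ x ∈ W, f x ∈ W → phi (f x) ≤ phi x ∧ gam x ≤ gam (f x)
  hphi_zero : ∀ x ∈ W, phi x = 0 → x ∈ aMinus f N
  hphi_seq : ∀ x : ℕ → Y, (∀ n, x n ∈ W) → Tendsto (fun n => phi (x n)) atTop (𝓝 0) →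
    ∃ (y : Y) (σ : ℕ → ℕ), StrictMono σ ∧ Tendsto (fun n => x (σ n)) atTop (𝓝 y)
  eps0 : ℝ
  eps0_pos : 0 < eps0
  hP1 : ∀ ε : ℝ, 0 < ε → ε ≤ eps0 →
    K ⊆ interior (P1set N N' phi ε) ∧ P1set N N' phi ε ⊆ W ∧
    (∀ x ∈ P1set N N' phi ε, f x ∈ N → f x ∈ P1set N N' phi ε) ∧
    (∀ x ∈ P1set N N' phi ε, f x ∉ N → ε ≤ gam x)

/-- Weak convergence of a sequence with respect to an auxiliary topology `τ`. -/
def WConv (τ : TopologicalSpace Y) (u : ℕ → Y) (y : Y) : Prop :=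
  Tendsto u atTop (@nhds Y τ y)

/-- The weak ω-limit set of `N` under `g` with respect to the topology `τ`. -/
def omegaWeak (τ : TopologicalSpace Y) (g : Y → Y) (N : Set Y) : Set Y :=
  {y | ∃ (x : ℕ → Y) (m : ℕ → ℕ), (∀ n, x n ∈ N) ∧ Tendsto m atTop atTop ∧
    WConv τ (fun n => g^[m n] (x n)) y}

/-- `K` is a weak attractor for `g` with respect to the weak topology `τ`: it admits a
positively `g`-invariant isolating neighborhood `N` with `ω^weak(N) ⊆ K`. -/
def IsWeakAttractor [TopologicalSpace Y] (τ : TopologicalSpace Y) (g : Y → Y)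
    (K : Set Y) : Prop :=
  ∃ N : Set Y, IsIsolatingNbhd g K N ∧ PosInvariant g N ∧ omegaWeak τ g N ⊆ K

/-- A set is sequentially compact with respect to the topology `τ`. -/
def WSeqCompact (τ : TopologicalSpace Y) (S : Set Y) : Prop :=
  ∀ u : ℕ → Y, (∀ n, u n ∈ S) →
    ∃ y ∈ S, ∃ σ : ℕ → ℕ, StrictMono σ ∧ WConv τ (fun k => u (σ k)) y

/-!
By admissibility, the limit points of the endpoints of ever longer `gₙ`-orbit segments in `C` form
a set `L` with `L ⊆ f(L)`, so they lie in `A⁻(C)`. If points near `K` left a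
neighborhood `C` of `K` under `gₙ` for infinitely many `n`, their exit times would tend to infinity
because `f(K) ⊆ K`; the last points before exit would then accumulate at some `y ∈ A⁻(C) ⊆ K`, and
their `gₙ`-images at `f(y) ∈ K ⊆ int C`, which is absurd. Hence a fixed neighborhood of `K` lies in
`A⁺(C)`, taken for `gₙ`, for all large `n`. The sets sought are `A⁺(B)` and `A⁺(C)` for a small
closed neighborhood `C` of `K`. Points of `A⁻(B)` for `gₙ` end arbitrarily long orbit segments in
`B`, so for large `n` they are also close to `K`, hence well inside `A⁺(B)`.
-/

section Dynamics

variable {g : Y → Y} {C D : Set Y}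

theorem aPlus_subset : aPlus g C ⊆ C := fun _ hx => hx.1

theorem posInvariant_aPlus : PosInvariant g (aPlus g C) :=
  fun _ hx => ⟨hx.2 1, fun k => hx.2 (k + 1)⟩

theorem isClosed_aPlus [TopologicalSpace Y] (hg : Continuous g) (hC : IsClosed C) :
    IsClosed (aPlus g C) := by
  simp only [aPlus, ofPred_and, ofPred_forall]
  exact hC.inter (isClosed_iInter fun k => hC.preimage (hg.iterate k))

theorem exists_exit_of_notMem_aPlus {x : Y} (hx : x ∈ C) (hx' : x ∉ aPlus g C) :
    ∃ m, (∀ k ≤ m, g^[k] x ∈ C) ∧ g^[m + 1] x ∉ C := by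
  by_contra! hstay
  have hseg : ∀ m, ∀ k ≤ m, g^[k] x ∈ C := by
    intro m
    induction m with
    | zero => simpa using hx
    | succ m ih => exact fun k hk => (Nat.le_succ_iff.1 hk).elim (ih k) (· ▸ hstay m ih)
  exact hx' ⟨hx, fun k => hseg k k le_rfl⟩

theorem aMinus_mono (h : C ⊆ D) : aMinus g C ⊆ aMinus g D :=
  fun _ ⟨hx, u, hu₀, hu, huC⟩ => ⟨h hx, u, hu₀, hu, fun k => h (huC k)⟩

theorem subset_aMinus_of_subset_image (hDC : D ⊆ C) (hD : D ⊆ g '' D) : D ⊆ aMinus g C := by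
  intro x hx
  choose! p hp hgp using hD
  have hmem : ∀ k, p^[k] x ∈ D := fun k => (show MapsTo p D D from hp).iterate k hx
  refine ⟨hDC hx, fun k => p^[k] x, rfl, fun k => ?_, fun k => hDC (hmem k)⟩
  simpa only [Function.iterate_succ_apply'] using hgp (hmem k)

theorem exists_orbit_segment_of_mem_aMinus {x : Y} (hx : x ∈ aMinus g C) (m : ℕ) :
    ∃ y, (∀ k ≤ m, g^[k] y ∈ C) ∧ g^[m] y = x := by
  obtain ⟨-, u, rfl, hu, huC⟩ := hx
  have hshift : ∀ k j, g^[k] (u (j + k)) = u j := by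
    intro k j
    induction k with
    | zero => rfl
    | succ k ih => rw [Function.iterate_succ_apply, ← add_assoc, hu, ih]
  refine ⟨u m, fun k hk => ?_, by simpa using hshift m 0⟩
  obtain ⟨j, rfl⟩ := Nat.exists_eq_add_of_le' hk
  exact hshift k j ▸ huC j

theorem posInvariant_maxInv : PosInvariant g (maxInv g C) := by
  rintro x ⟨hplus, -, u, hu₀, hu, huC⟩
  refine ⟨posInvariant_aPlus x hplus, hplus.2 1, fun k => Nat.casesOn k (g x) u, rfl, ?_, ?_⟩
  · rintro (_ | k)
    exacts [congrArg g hu₀, hu k]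
  · rintro (_ | k)
    exacts [hplus.2 1, huC k]

end Dynamics

section ContinuousConvergence

variable [TopologicalSpace Y] {g : ℕ → Y → Y} {f : Y → Y}

theorem exists_tendsto_comp_eq {σ : ℕ → ℕ} (hσ : StrictMono σ) {z : ℕ → Y} {z₀ : Y}
    (hz : Tendsto z atTop (𝓝 z₀)) :
    ∃ u : ℕ → Y, u ∘ σ = z ∧ Tendsto u atTop (𝓝 z₀) := by
  refine ⟨Function.extend σ z fun _ => z₀, Function.extend_comp hσ.injective _ _,
    tendsto_def.2 fun U hU => ?_⟩
  obtain ⟨M, hM⟩ := eventually_atTop.1 (hz hU)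
  filter_upwards [eventually_ge_atTop (σ M)] with k hk
  by_cases hkσ : ∃ j, σ j = k
  · obtain ⟨j, rfl⟩ := hkσ
    simpa only [mem_preimage, hσ.injective.extend_apply] using hM j (hσ.le_iff_le.1 hk)
  · simpa only [mem_preimage, Function.extend_apply' _ _ _ hkσ] using mem_of_mem_nhds hU

theorem MapSeqConv.comp_strictMono (hg : MapSeqConv g f) {σ : ℕ → ℕ} (hσ : StrictMono σ) :
    MapSeqConv (fun n => g (σ n)) f := by
  intro x x₀ hx
  obtain ⟨u, rfl, hu⟩ := exists_tendsto_comp_eq hσ hx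
  exact (hg u x₀ hu).comp hσ.tendsto_atTop

theorem MapSeqConv.iterate (hg : MapSeqConv g f) (k : ℕ) :
    MapSeqConv (fun n => (g n)^[k]) f^[k] := by
  intro x x₀ hx
  induction k with
  | zero => exact hx
  | succ k ih => simpa only [Function.iterate_succ_apply'] using hg _ _ ih

theorem exists_strictMono_of_frequently_prod_nhds [FirstCountableTopology Y]
    {P : ℕ → Y → Prop} {z : Y} (h : ∃ᶠ p in atTop ×ˢ 𝓝 z, P p.1 p.2) :
    ∃ (σ : ℕ → ℕ) (x : ℕ → Y), StrictMono σ ∧ Tendsto x atTop (𝓝 z) ∧ ∀ j, P (σ j) (x j) := by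
  obtain ⟨p, hp, hP⟩ := exists_seq_forall_of_frequently h
  obtain ⟨τ, hτ, hpτ⟩ := strictMono_subseq_of_tendsto_atTop hp.fst
  exact ⟨_, _, hpτ, hp.snd.comp hτ.tendsto_atTop, fun j => hP (τ j)⟩

/-- `N` is admissible for every subsequence of `(gₙ)`. Plain `SeqAdmissible` does not pass to
subsequences, since it only constrains families with an orbit segment for each index. -/
def SubseqAdmissible (g : ℕ → Y → Y) (N : Set Y) : Prop :=
  ∀ σ : ℕ → ℕ, StrictMono σ → SeqAdmissible (fun n => g (σ n)) N

theorem SubseqAdmissible.mono {M N : Set Y} (hN : SubseqAdmissible g N) (h : M ⊆ N) :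
    SubseqAdmissible g M :=
  fun σ hσ x m hm hseg => hN σ hσ x m hm fun n k hk => h (hseg n k hk)

theorem SubseqAdmissible.comp_strictMono {N : Set Y} (hN : SubseqAdmissible g N) {σ : ℕ → ℕ}
    (hσ : StrictMono σ) : SubseqAdmissible (fun n => g (σ n)) N :=
  fun _ hτ => hN _ (hσ.comp hτ)

end ContinuousConvergence

section Admissible

variable [TopologicalSpace Y] {g : ℕ → Y → Y} {f : Y → Y} {C K : Set Y}

/-- The limits of endpoints of `gₙ`-orbit segments in `C` whose lengths tend to infinity, taken
along arbitrary subsequences of `(gₙ)`. -/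
def endpointLimitSet (g : ℕ → Y → Y) (C : Set Y) : Set Y :=
  {y | ∃ (σ : ℕ → ℕ) (x : ℕ → Y) (m : ℕ → ℕ), StrictMono σ ∧ Tendsto m atTop atTop ∧
    (∀ n, ∀ k ≤ m n, (g (σ n))^[k] (x n) ∈ C) ∧
    Tendsto (fun n => (g (σ n))^[m n] (x n)) atTop (𝓝 y)}

theorem endpointLimitSet_subset (hC : IsClosed C) : endpointLimitSet g C ⊆ C := by
  rintro y ⟨σ, x, m, -, -, hseg, hy⟩
  exact hC.mem_of_tendsto hy (.of_forall fun n => hseg n _ le_rfl)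

theorem endpointLimitSet_subset_image [T2Space Y] (hg : MapSeqConv g f)
    (hadm : SubseqAdmissible g C) : endpointLimitSet g C ⊆ f '' endpointLimitSet g C := by
  rintro y ⟨σ, x, m, hσ, hm, hseg, hy⟩
  have hpred : Tendsto (fun n => m n - 1) atTop atTop := (tendsto_sub_atTop_nat 1).comp hm
  have hseg' : ∀ n, ∀ k ≤ m n - 1, (g (σ n))^[k] (x n) ∈ C :=
    fun n k hk => hseg n k (hk.trans (Nat.sub_le _ _))
  obtain ⟨w, ψ, hψ, hw⟩ := hadm σ hσ x (fun n => m n - 1) hpred hseg'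
  refine ⟨w, ⟨σ ∘ ψ, x ∘ ψ, fun n => m (ψ n) - 1, hσ.comp hψ, hpred.comp hψ.tendsto_atTop,
    fun n => hseg' (ψ n), hw⟩, ?_⟩
  have hstep := hg.comp_strictMono (hσ.comp hψ) _ _ hw
  refine tendsto_nhds_unique (hstep.congr' ?_) (hy.comp hψ.tendsto_atTop)
  filter_upwards [(hm.comp hψ.tendsto_atTop).eventually_ge_atTop 1] with n hn
  simp only [Function.comp_apply] at hn ⊢
  rw [← Function.iterate_succ_apply' (g (σ (ψ n))), Nat.succ_eq_add_one, Nat.sub_add_cancel hn]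

theorem exists_tendsto_endpoint_mem_aMinus [T2Space Y] (hg : MapSeqConv g f)
    (hadm : SubseqAdmissible g C) (hC : IsClosed C) {x : ℕ → Y} {m : ℕ → ℕ}
    (hm : Tendsto m atTop atTop) (hseg : ∀ n, ∀ k ≤ m n, (g n)^[k] (x n) ∈ C) :
    ∃ y ∈ aMinus f C, ∃ ψ : ℕ → ℕ, StrictMono ψ ∧
      Tendsto (fun n => (g (ψ n))^[m (ψ n)] (x (ψ n))) atTop (𝓝 y) := by
  obtain ⟨y, ψ, hψ, hy⟩ := hadm id strictMono_id x m hm hseg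
  refine ⟨y, ?_, ψ, hψ, hy⟩
  exact subset_aMinus_of_subset_image (endpointLimitSet_subset hC)
    (endpointLimitSet_subset_image hg hadm)
    ⟨ψ, x ∘ ψ, m ∘ ψ, hψ, hm.comp hψ.tendsto_atTop, fun n => hseg (ψ n), hy⟩

theorem eventually_aMinus_subset [T2Space Y] (hg : MapSeqConv g f)
    (hadm : SubseqAdmissible g C) (hC : IsClosed C) {U : Set Y} (hU : IsOpen U)
    (hfU : aMinus f C ⊆ U) : ∀ᶠ n in atTop, aMinus (g n) C ⊆ U := by
  by_contra hfreq
  obtain ⟨σ, hσ, hesc⟩ := extraction_of_frequently_atTop (not_eventually.1 hfreq)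
  choose x hx hxU using fun n => not_subset.1 (hesc n)
  choose w hseg hwx using fun n => exists_orbit_segment_of_mem_aMinus (hx n) n
  obtain ⟨y, hy, ψ, -, hlim⟩ := exists_tendsto_endpoint_mem_aMinus (hg.comp_strictMono hσ)
    (hadm.comp_strictMono hσ) hC tendsto_id hseg
  obtain ⟨n, hn⟩ := (hlim.eventually (hU.mem_nhds (hfU hy))).exists
  exact hxU (ψ n) (hwx (ψ n) ▸ hn)

theorem tendsto_exit_time_atTop (hg : MapSeqConv g f) (hK : PosInvariant f K)
    (hKC : C ∈ 𝓝ˢ K) {x : ℕ → Y} {z : Y} (hz : z ∈ K) (hx : Tendsto x atTop (𝓝 z))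
    {m : ℕ → ℕ} (hexit : ∀ n, (g n)^[m n + 1] (x n) ∉ C) : Tendsto m atTop atTop := by
  have hstay : ∀ k, ∀ᶠ n in atTop, (g n)^[k] (x n) ∈ C := fun k =>
    (hg.iterate k x z hx).eventually
      (mem_nhdsSet_iff_forall.1 hKC _ ((show MapsTo f K K from hK).iterate k hz))
  refine tendsto_atTop.2 fun M => ?_
  filter_upwards [(eventually_all_finset (Finset.range (M + 1))).2 fun k _ => hstay k] with n hn
  by_contra! hlt
  exact hexit n (hn _ (Finset.mem_range.2 (by omega)))

theorem exists_mem_aPlus_of_tendsto [T2Space Y] (hg : MapSeqConv g f)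
    (hadm : SubseqAdmissible g C) (hC : IsClosed C) (hK : PosInvariant f K)
    (hKC : C ∈ 𝓝ˢ K) (hCK : aMinus f C ⊆ K) {x : ℕ → Y} {z : Y} (hz : z ∈ K)
    (hx : Tendsto x atTop (𝓝 z)) (hxC : ∀ n, x n ∈ C) : ∃ n, x n ∈ aPlus (g n) C := by
  by_contra! hnot
  choose m hseg hexit using fun n => exists_exit_of_notMem_aPlus (hxC n) (hnot n)
  have hm : Tendsto m atTop atTop := tendsto_exit_time_atTop hg hK hKC hz hx hexit
  obtain ⟨y, hy, ψ, hψ, hlim⟩ := exists_tendsto_endpoint_mem_aMinus hg hadm hC hm hseg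
  have hstep := hg.comp_strictMono hψ _ _ hlim
  obtain ⟨n, hn⟩ :=
    (hstep.eventually (mem_nhdsSet_iff_forall.1 hKC _ (hK y (hCK hy)))).exists
  exact hexit (ψ n) (Function.iterate_succ_apply' (g (ψ n)) (m (ψ n)) _ ▸ hn)

theorem eventually_prod_nhds_mem_aPlus [T2Space Y] [FirstCountableTopology Y]
    (hg : MapSeqConv g f) (hadm : SubseqAdmissible g C) (hC : IsClosed C)
    (hK : PosInvariant f K) (hKC : C ∈ 𝓝ˢ K) (hCK : aMinus f C ⊆ K) {z : Y} (hz : z ∈ K) :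
    ∀ᶠ p : ℕ × Y in atTop ×ˢ 𝓝 z, p.2 ∈ aPlus (g p.1) C := by
  by_contra hfreq
  have hnear : ∀ᶠ p : ℕ × Y in atTop ×ˢ 𝓝 z, p.2 ∈ C :=
    tendsto_snd.eventually (mem_nhdsSet_iff_forall.1 hKC z hz)
  obtain ⟨σ, x, hσ, hx, hxσ⟩ := exists_strictMono_of_frequently_prod_nhds
    (P := fun n x => x ∉ aPlus (g n) C ∧ x ∈ C) ((not_eventually.1 hfreq).and_eventually hnear)
  obtain ⟨n, hn⟩ := exists_mem_aPlus_of_tendsto (hg.comp_strictMono hσ)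
    (hadm.comp_strictMono hσ) hC hK hKC hCK hz hx fun n => (hxσ n).2
  exact (hxσ n).1 hn

theorem exists_mem_nhdsSet_eventually_subset_aPlus [T2Space Y] [FirstCountableTopology Y]
    (hg : MapSeqConv g f) (hadm : SubseqAdmissible g C) (hC : IsClosed C) (hKc : IsCompact K)
    (hK : PosInvariant f K) (hKC : C ∈ 𝓝ˢ K) (hCK : aMinus f C ⊆ K) :
    ∃ V ∈ 𝓝ˢ K, ∀ᶠ n in atTop, V ⊆ aPlus (g n) C := by
  have hprod : ∀ᶠ p : ℕ × Y in atTop ×ˢ 𝓝ˢ K, p.2 ∈ aPlus (g p.1) C :=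
    hKc.mem_prod_nhdsSet_of_forall fun _ => eventually_prod_nhds_mem_aPlus hg hadm hC hK hKC hCK
  obtain ⟨P, hP, Q, hQ, hPQ⟩ := eventually_prod_iff.1 hprod
  exact ⟨{x | Q x}, hQ, hP.mono fun n hn x hx => hPQ hn hx⟩

end Admissible

theorem continuation_neighborhoods_of_attractor_general [MetricSpace Y] {f : Y → Y} {K B : Set Y}
    (hKc : IsCompact K) (hB : IsIsolatingNbhd f K B) (hBK : aMinus f B ⊆ K) {fn : ℕ → Y → Y}
    (hfn_cont : ∀ n, Continuous (fn n)) (hfn : MapSeqConv fn f) (hadm : SubseqAdmissible fn B) :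
    ∃ δ : ℝ, 0 < δ ∧ ∃ n₀ : ℕ, ∀ n, n₀ ≤ n →
      ∃ Nn Nn' : Set Y, IsClosed Nn ∧ IsClosed Nn' ∧
        PosInvariant (fn n) Nn ∧ PosInvariant (fn n) Nn' ∧
        Nn ⊆ thickening δ K ∧ thickening δ K ⊆ Nn' ∧ Nn' ⊆ B ∧ K ⊆ interior Nn ∧
        ∃ ε : ℝ, 0 < ε ∧ thickening ε (maxInv (fn n) B) ⊆ Nn' := by
  obtain ⟨hBc, hKB, hinv⟩ := hB
  have hK : PosInvariant f K := hinv ▸ posInvariant_maxInv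
  have hBnhds : B ∈ 𝓝ˢ K := subset_interior_iff_mem_nhdsSet.1 hKB
  obtain ⟨V, hV, hVplus⟩ :=
    exists_mem_nhdsSet_eventually_subset_aPlus hfn hadm hBc hKc hK hBnhds hBK
  obtain ⟨δ, hδ, hδV⟩ := (hasBasis_nhdsSet_thickening hKc).mem_iff.1 hV
  obtain ⟨C, hKC, hCc, hCsub⟩ := exists_mem_nhdsSet_isClosed_subset
    (inter_mem hBnhds (thickening_mem_nhdsSet K hδ)) hKc.isClosed
  obtain ⟨hCB, hCδ⟩ := subset_inter_iff.1 hCsub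
  obtain ⟨V', hV', hV'plus⟩ := exists_mem_nhdsSet_eventually_subset_aPlus hfn
    (hadm.mono hCB) hCc hKc hK hKC ((aMinus_mono hCB).trans hBK)
  have hminus := eventually_aMinus_subset hfn hadm hBc isOpen_thickening
    (hBK.trans (self_subset_thickening (half_pos hδ) K))
  obtain ⟨n₀, hn₀⟩ := eventually_atTop.1 (hVplus.and (hV'plus.and hminus))
  refine ⟨δ, hδ, n₀, fun n hn => ?_⟩
  obtain ⟨hVB, hV'C, hmaxInv⟩ := hn₀ n hn
  have hδB : thickening δ K ⊆ aPlus (fn n) B := hδV.trans hVB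
  refine ⟨aPlus (fn n) C, aPlus (fn n) B, isClosed_aPlus (hfn_cont n) hCc,
    isClosed_aPlus (hfn_cont n) hBc, posInvariant_aPlus, posInvariant_aPlus,
    aPlus_subset.trans hCδ, hδB, aPlus_subset,
    subset_interior_iff_mem_nhdsSet.2 (mem_of_superset hV' hV'C), δ / 2, half_pos hδ, ?_⟩
  calc thickening (δ / 2) (maxInv (fn n) B)
    _ ⊆ thickening (δ / 2) (thickening (δ / 2) K) :=
      thickening_subset_of_subset _ (inter_subset_right.trans hmaxInv)
    _ ⊆ thickening (δ / 2 + δ / 2) K := thickening_thickening_subset _ _ _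
    _ = thickening δ K := by rw [add_halves]
    _ ⊆ aPlus (fn n) B := hδB

/-- **Continuation corollary**: with `B = P₁^{δ₀}` the positively `f`-invariant admissible
isolating neighborhood of `K` and `fₙ → f` as before, for large `n` there are closed,
positively `fₙ`-invariant sets `Nₙ ⊆ U_δ(K) ⊆ Nₙ' ⊆ B` with `K ⊆ int Nₙ`, and some
`ε`-neighborhood of `Kₙ = A_{fₙ}(B)` is contained in `Nₙ'`. -/
theorem continuation_neighborhoods_of_attractor
    {Y : Type*} [MetricSpace Y] [CompleteSpace Y] [TopologicalSpace.SeparableSpace Y]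
    (S : LyapunovSetup Y)
    (δ₀ : ℝ) (hδ₀ : 0 < δ₀)
    (hB_pos : PosInvariant S.f (P1set S.N S.N' S.phi δ₀))
    (hB_adm : Admissible S.f (P1set S.N S.N' S.phi δ₀))
    (hB_iso : IsIsolatingNbhd S.f S.K (P1set S.N S.N' S.phi δ₀))
    (fn : ℕ → Y → Y) (hfn_cont : ∀ n, Continuous (fn n))
    (hfn_conv : MapSeqConv fn S.f)
    (hN'_adm : ∀ σ : ℕ → ℕ, StrictMono σ → SeqAdmissible (fun m => fn (σ m)) S.N') :
    ∃ δ : ℝ, 0 < δ ∧ ∃ n₀ : ℕ, ∀ n, n₀ ≤ n →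
      ∃ Nn Nn' : Set Y, IsClosed Nn ∧ IsClosed Nn' ∧
        PosInvariant (fn n) Nn ∧ PosInvariant (fn n) Nn' ∧
        Nn ⊆ Metric.thickening δ S.K ∧
        Metric.thickening δ S.K ⊆ Nn' ∧
        Nn' ⊆ P1set S.N S.N' S.phi δ₀ ∧
        S.K ⊆ interior Nn ∧
        ∃ ε : ℝ, 0 < ε ∧
          Metric.thickening ε (maxInv (fn n) (P1set S.N S.N' S.phi δ₀)) ⊆ Nn' := by
  have hBN : P1set S.N S.N' S.phi δ₀ ⊆ S.N := inter_subset_left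
  have hNN' : S.N ⊆ S.N' := fun _ hx => interior_subset (S.hN_sub hx).1
  exact continuation_neighborhoods_of_attractor_general S.hK_cpt hB_iso
    ((aMinus_mono hBN).trans S.hAminus.subset) hfn_cont hfn_conv
    (SubseqAdmissible.mono hN'_adm (hBN.trans hNN'))
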